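/- Let n ≥ 1 and let h, ψ, ψ̃ : ℂ → M_n(ℂ) be smooth maps with h(w) invertible for every w ∈ ℂ. Define pointwise A_w := h⁻¹ ∂_w h, A_w̄ := 0, φ_w := h⁻¹ (∂_w ψ) h, and φ̃_w̄ := ∂_w̄ ψ̃. Then the Lax connection of the Hitchin system built from these components is flat for every spectral parameter z ∈ ℂ ∖ {0} if and only if for all w ∈ ℂ: (i) ∂_w̄(h⁻¹ ∂_w h)(w) = [h(w)⁻¹ (∂_w ψ)(w) h(w), (∂_w̄ ψ̃)(w)], (ii) ∂_w̄(h⁻¹ (∂_w ψ) h)(w) = 0, and (iii) ∂_w(∂_w̄ ψ̃)(w) + [h(w)⁻¹ (∂_w h)(w), (∂_w̄ ψ̃)(w)] = 0. (These are Hitchin's equations in a holomorphic gauge, expressed in terms of the Hermitian-metric potential h and the Higgs-field potentials ψ, ψ̃.) -/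

import Mathlib

open Matrix Complex

attribute [local instance] Matrix.normedAddCommGroup Matrix.normedSpace

/-- Wirtinger derivative ∂_w F(w) = (1/2)(DF(w)(1) - i·DF(w)(i)). -/
noncomputable def wderiv {E : Type*} [NormedAddCommGroup E] [NormedSpace ℂ E]
    (F : ℂ → E) (w : ℂ) : E :=
  (2 : ℂ)⁻¹ • (fderiv ℝ F w 1 - Complex.I • fderiv ℝ F w Complex.I)

/-- Wirtinger derivative ∂_w̄ F(w) = (1/2)(DF(w)(1) + i·DF(w)(i)). -/
noncomputable def wbarderiv {E : Type*} [NormedAddCommGroup E] [NormedSpace ℂ E]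
    (F : ℂ → E) (w : ℂ) : E :=
  (2 : ℂ)⁻¹ • (fderiv ℝ F w 1 + Complex.I • fderiv ℝ F w Complex.I)

/-- dw-component of the Lax connection: 𝒜_w(z,w) = A_w(w) + z⁻¹ φ_w(w). -/
noncomputable def laxW {n : ℕ} (Aw φw : ℂ → Matrix (Fin n) (Fin n) ℂ) (z w : ℂ) :
    Matrix (Fin n) (Fin n) ℂ :=
  Aw w + z⁻¹ • φw w

/-- dw̄-component of the Lax connection: 𝒜_w̄(z,w) = A_w̄(w) + z φ̃_w̄(w). -/
noncomputable def laxWbar {n : ℕ} (Awb φtwb : ℂ → Matrix (Fin n) (Fin n) ℂ) (z w : ℂ) :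
    Matrix (Fin n) (Fin n) ℂ :=
  Awb w + z • φtwb w

/-- Curvature of the Lax connection at spectral parameter z. -/
noncomputable def laxCurvature {n : ℕ} (Aw Awb φw φtwb : ℂ → Matrix (Fin n) (Fin n) ℂ)
    (z w : ℂ) : Matrix (Fin n) (Fin n) ℂ :=
  wderiv (laxWbar Awb φtwb z) w - wbarderiv (laxW Aw φw z) w
    + (laxW Aw φw z w * laxWbar Awb φtwb z w - laxWbar Awb φtwb z w * laxW Aw φw z w)

theorem hit_diff_entry {n : ℕ} {M : ℂ → Matrix (Fin n) (Fin n) ℂ} :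
    Differentiable ℝ M ↔ ∀ i j, Differentiable ℝ (fun w => M w i j) :=
  ⟨fun h i j => differentiable_pi.1 (differentiable_pi.1 h i) j,
    fun h => differentiable_pi.2 fun i => differentiable_pi.2 fun j => h i j⟩

theorem hit_diff_mul {n : ℕ} {M N : ℂ → Matrix (Fin n) (Fin n) ℂ}
    (hM : Differentiable ℝ M) (hN : Differentiable ℝ N) :
    Differentiable ℝ (fun w => M w * N w) := by
  rw [hit_diff_entry] at *
  intro i j
  simp only [Matrix.mul_apply]
  exact Differentiable.fun_sum fun k _ => (hM i k).mul (hN k j)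

theorem hit_diff_det {n : ℕ} {M : ℂ → Matrix (Fin n) (Fin n) ℂ}
    (hM : Differentiable ℝ M) : Differentiable ℝ (fun w => (M w).det) := by
  rw [hit_diff_entry] at hM
  simp only [Matrix.det_apply']
  refine Differentiable.fun_sum fun σ _ => ?_
  refine (differentiable_const _).mul ?_
  intro w
  exact (HasFDerivAt.finsetProd (𝕜 := ℝ) (g := fun k w => M w (σ k) k) (x := w)
    fun k _ => (hM (σ k) k w).hasFDerivAt).differentiableAt

theorem hit_diff_inv {n : ℕ} {M : ℂ → Matrix (Fin n) (Fin n) ℂ}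
    (hM : Differentiable ℝ M) (hu : ∀ w, IsUnit (M w)) :
    Differentiable ℝ (fun w => (M w)⁻¹) := by
  have hd := hit_diff_det hM
  have h0 : ∀ w, (M w).det ≠ 0 := fun w =>
    ((Matrix.isUnit_iff_isUnit_det _).1 (hu w)).ne_zero
  rw [hit_diff_entry]
  intro i j
  simp only [Matrix.inv_def, Ring.inverse_eq_inv', Matrix.smul_apply, Matrix.adjugate_apply,
    smul_eq_mul]
  refine (hd.inv h0).mul (hit_diff_det ?_)
  rw [hit_diff_entry] at *
  intro k l
  simp only [Matrix.updateRow_apply]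
  split_ifs
  · exact differentiable_const _
  · exact hM k l

theorem hit_diff_fderiv {E : Type*} [NormedAddCommGroup E] [NormedSpace ℂ E] {M : ℂ → E}
    (hM : ContDiff ℝ (⊤ : ℕ∞) M) (v : ℂ) : Differentiable ℝ (fun w => fderiv ℝ M w v) := by
  have h1 : Differentiable ℝ (fderiv ℝ M) :=
    (hM.fderiv_right (m := 1) (by
      have : ((2 : ℕ∞) : WithTop ℕ∞) ≤ ((⊤ : ℕ∞) : WithTop ℕ∞) := by exact_mod_cast le_top
      rw [one_add_one_eq_two]; exact this)).differentiable (by simp)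
  exact h1.clm_apply (differentiable_const v)

theorem hit_diff_wderiv {E : Type*} [NormedAddCommGroup E] [NormedSpace ℂ E] {M : ℂ → E}
    (hM : ContDiff ℝ (⊤ : ℕ∞) M) : Differentiable ℝ (fun w => wderiv M w) := by
  unfold wderiv
  exact ((hit_diff_fderiv hM 1).sub ((hit_diff_fderiv hM I).const_smul I)).const_smul (2 : ℂ)⁻¹

theorem hit_diff_wbarderiv {E : Type*} [NormedAddCommGroup E] [NormedSpace ℂ E] {M : ℂ → E}
    (hM : ContDiff ℝ (⊤ : ℕ∞) M) : Differentiable ℝ (fun w => wbarderiv M w) := by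
  unfold wbarderiv
  exact ((hit_diff_fderiv hM 1).add ((hit_diff_fderiv hM I).const_smul I)).const_smul (2 : ℂ)⁻¹

theorem hit_wderiv_smul {E : Type*} [NormedAddCommGroup E] [NormedSpace ℂ E] {Q : ℂ → E}
    (hQ : Differentiable ℝ Q) (z w : ℂ) :
    wderiv (fun x => 0 + z • Q x) w = z • wderiv Q w := by
  have : HasFDerivAt (fun x => 0 + z • Q x) (z • fderiv ℝ Q w) w := by
    simp only [zero_add]
    exact (hQ w).hasFDerivAt.const_smul z
  rw [wderiv, this.fderiv, wderiv]
  simp only [ContinuousLinearMap.smul_apply]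
  module

theorem hit_wbarderiv_add {E : Type*} [NormedAddCommGroup E] [NormedSpace ℂ E] {A P : ℂ → E}
    (hA : Differentiable ℝ A) (hP : Differentiable ℝ P) (z w : ℂ) :
    wbarderiv (fun x => A x + z • P x) w = wbarderiv A w + z • wbarderiv P w := by
  have : HasFDerivAt (fun x => A x + z • P x) (fderiv ℝ A w + z • fderiv ℝ P w) w :=
    (hA w).hasFDerivAt.add ((hP w).hasFDerivAt.const_smul z)
  rw [wbarderiv, this.fderiv, wbarderiv, wbarderiv]
  simp only [ContinuousLinearMap.smul_apply, ContinuousLinearMap.add_apply]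
  module

theorem hit_curv {n : ℕ} {A P Q : ℂ → Matrix (Fin n) (Fin n) ℂ}
    (hA : Differentiable ℝ A) (hP : Differentiable ℝ P) (hQ : Differentiable ℝ Q)
    (z w : ℂ) (hz : z ≠ 0) :
    laxCurvature A (fun _ => 0) P Q z w =
      z • (wderiv Q w + (A w * Q w - Q w * A w)) - z⁻¹ • wbarderiv P w
        - (wbarderiv A w - (P w * Q w - Q w * P w)) := by
  have e1 : wderiv (laxWbar (fun _ => 0) Q z) w = z • wderiv Q w :=
    hit_wderiv_smul hQ z w
  have e2 : wbarderiv (laxW A P z) w = wbarderiv A w + z⁻¹ • wbarderiv P w :=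
    hit_wbarderiv_add hA hP z⁻¹ w
  rw [laxCurvature, e1, e2]
  simp only [laxW, laxWbar, zero_add, add_mul, mul_add, smul_mul_assoc, mul_smul_comm,
    smul_add, smul_smul, inv_mul_cancel₀ hz, mul_inv_cancel₀ hz, one_smul]
  module

theorem hit_laurent {V : Type*} [AddCommGroup V] [Module ℂ V] (C B P : V) :
    (∀ z : ℂ, z ≠ 0 → z • C - z⁻¹ • B - P = 0) ↔ P = 0 ∧ B = 0 ∧ C = 0 := by
  constructor
  · intro H
    have h1 := H 1 one_ne_zero
    have h2 := H (-1) (by norm_num)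
    have h3 := H 2 (by norm_num)
    have hP : P = 0 := by
      linear_combination (norm := module) (-(1/2) : ℂ) • h1 + (-(1/2) : ℂ) • h2
    have hC : C = 0 := by
      linear_combination (norm := module) (-(1/3) : ℂ) • h1 + (2/3 : ℂ) • h3 + (1/3 : ℂ) • hP
    refine ⟨hP, ?_, hC⟩
    linear_combination (norm := module) (-1 : ℂ) • h1 + hC - hP
  · rintro ⟨rfl, rfl, rfl⟩ z _
    simp

/-- Hitchin's equations in a holomorphic gauge, in terms of the Hermitian-metric potential
`h` and the Higgs-field potentials `ψ, ψ̃`: the Lax connection built from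
A_w = h⁻¹ ∂_w h, A_w̄ = 0, φ_w = h⁻¹ (∂_w ψ) h, φ̃_w̄ = ∂_w̄ ψ̃
is flat for all spectral parameters iff the potential form of Hitchin's equations holds. -/
theorem flat_lax_iff_hitchin_potentials {n : ℕ} (hn : 1 ≤ n)
    (h ψ ψt : ℂ → Matrix (Fin n) (Fin n) ℂ)
    (hh : ContDiff ℝ (⊤ : ℕ∞) h) (hψ : ContDiff ℝ (⊤ : ℕ∞) ψ) (hψt : ContDiff ℝ (⊤ : ℕ∞) ψt)
    (hinv : ∀ w : ℂ, IsUnit (h w)) :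
    (∀ z : ℂ, z ≠ 0 → ∀ w : ℂ,
        laxCurvature (fun w => (h w)⁻¹ * wderiv h w) (fun _ => 0)
          (fun w => (h w)⁻¹ * wderiv ψ w * h w) (fun w => wbarderiv ψt w) z w = 0) ↔
      (∀ w : ℂ,
        wbarderiv (fun w => (h w)⁻¹ * wderiv h w) w =
            ((h w)⁻¹ * wderiv ψ w * h w) * wbarderiv ψt w
              - wbarderiv ψt w * ((h w)⁻¹ * wderiv ψ w * h w) ∧
        wbarderiv (fun w => (h w)⁻¹ * wderiv ψ w * h w) w = 0 ∧
        wderiv (fun w => wbarderiv ψt w) w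
            + ((h w)⁻¹ * wderiv h w * wbarderiv ψt w
              - wbarderiv ψt w * ((h w)⁻¹ * wderiv h w)) = 0) := by
  have dA := hit_diff_mul (hit_diff_inv (hh.differentiable (by simp)) hinv) (hit_diff_wderiv hh)
  have dP := hit_diff_mul (hit_diff_mul (hit_diff_inv (hh.differentiable (by simp)) hinv)
    (hit_diff_wderiv hψ)) (hh.differentiable (by simp))
  have dQ := hit_diff_wbarderiv hψt
  have key := fun w => hit_laurent
    (wderiv (fun w => wbarderiv ψt w) w + ((h w)⁻¹ * wderiv h w * wbarderiv ψt w
              - wbarderiv ψt w * ((h w)⁻¹ * wderiv h w)))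
    (wbarderiv (fun w => (h w)⁻¹ * wderiv ψ w * h w) w)
    (wbarderiv (fun w => (h w)⁻¹ * wderiv h w) w -
            (((h w)⁻¹ * wderiv ψ w * h w) * wbarderiv ψt w
              - wbarderiv ψt w * ((h w)⁻¹ * wderiv ψ w * h w)))
  constructor
  · intro H w
    have := (key w).1 fun z hz => by
      rw [← H z hz w, hit_curv dA dP dQ z w hz]
    exact ⟨sub_eq_zero.1 this.1, this.2⟩
  · intro H z hz w
    rw [hit_curv dA dP dQ z w hz]
    exact (key w).2 ⟨sub_eq_zero.2 (H w).1, (H w).2⟩ z hz
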